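/- Let p ≥ 11 be a prime and r ≥ 2 an integer. Then the sum of 1/(l_1 l_2 l_3 l_4 l_5 l_6) over all 6-tuples of positive integers with l_1+⋯+l_6 = p^r and each l_i coprime to p is congruent to -(5!/18)·p^{r-1}·B_{p-3}² modulo p^r. -/

import Mathlib

/-- `x ≡ y (mod p^r)` as p-integral rationals. -/
def ratCong (p r : ℕ) (x y : ℚ) : Prop :=
  ∃ z : ℚ, x - y = (p : ℚ) ^ r * z ∧ ¬ (p ∣ z.den)

/-- Sum of `1/(l₁⋯lₙ)` over positive `n`-tuples summing to `N` with each `lᵢ` coprime to `p`. -/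
def hsum (p n N : ℕ) : ℚ :=
  ∑ l ∈ (Fintype.piFinset fun _ : Fin n => Finset.Icc 1 N) |>.filter
      (fun l => ∑ i, l i = N ∧ ∀ i, ¬ p ∣ l i),
    ∏ i, (1 : ℚ) / l i

/-!
The sum is the coefficient of `x ^ p ^ r` in `f ^ 6`, where `f` is the series `∑ xⁿ / n` over
`ℤ_[p]`, taken over `n` prime to `p`. The `i`-th difference with step `p` of the coefficients of `f`
is divisible by `pⁱ`, and that of the coefficients of `f ^ (d + 1)` by `pⁱ⁻ᵈ`. Newton's formula for
the coefficient at `p ^ (r - 1) • p` therefore determines it modulo `p ^ r` from the coefficients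
at `x ^ p, …, x ^ (5 p)` modulo `p`.

Those are found from `p f(x) = p L(x) - L(xᵖ)` with `L(x) = -log (1 - x)`. The coefficients of
powers of `L` are those of rising factorials, so `pⁿ fⁿ` is a Vandermonde sum perturbed by the ratio
of the rising factorials of `p X` and of `X`. Modulo `p ^ 7` this ratio is the exponential of
`p ^ 3 α a X (X + a)` plus a multiple of `p ^ 5`. For `0 ≤ m < p - 1` the coefficients at
`x ^ (p (m + 1))` come out as `6 α (m + 1)` in `f ^ 3` and `360 α² (m + 2 choose 3)` in `f ^ 6`,
up to multiples of `p`, whence `-60 α² p ^ (r - 1)` for the sum. Finally Faulhaber's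
formula modulo `p` evaluates the coefficient of `xᵖ` in `f ^ 3` as `-2 B_{p-3}`, so that `3 α` is
congruent to `-B_{p-3}`.
-/

namespace CoprimeHarmonicSum

open Finset
open scoped Polynomial PowerSeries Ring fwdDiff

section RecipSeries

open PowerSeries

/-- The power series `∑ xⁿ / n` over `R`, where `n` runs over the natural numbers that are units
of `R`. Over a field of characteristic zero this is `-log (1 - x)`; over `ℤ_[p]` it is the
generating function of the `1 / n` with `p ∤ n`. -/
noncomputable def recipSeries (R : Type*) [Ring R] : R⟦X⟧ :=
  mk fun n => (n : R)⁻¹ʳ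

@[simp]
lemma coeff_recipSeries (R : Type*) [Ring R] (n : ℕ) : coeff n (recipSeries R) = (n : R)⁻¹ʳ :=
  coeff_mk _ _

@[simp]
lemma constantCoeff_recipSeries (R : Type*) [Ring R] : constantCoeff (recipSeries R) = 0 := by
  rw [← coeff_zero_eq_constantCoeff_apply, coeff_recipSeries, Nat.cast_zero, Ring.inverse_zero]

section PadicInt

variable {p : ℕ} [Fact p.Prime]

lemma isUnit_natCast_iff {n : ℕ} : IsUnit (n : ℤ_[p]) ↔ ¬p ∣ n := by
  rw [PadicInt.isUnit_iff, PadicInt.norm_natCast_eq_one_iff,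
    Nat.Prime.coprime_iff_not_dvd Fact.out]

lemma natCast_mul_inverse {n : ℕ} (h : ¬p ∣ n) : (n : ℤ_[p]) * (n : ℤ_[p])⁻¹ʳ = 1 :=
  Ring.mul_inverse_cancel _ (isUnit_natCast_iff.2 h)

lemma inverse_natCast_of_dvd {n : ℕ} (h : p ∣ n) : (n : ℤ_[p])⁻¹ʳ = 0 :=
  Ring.inverse_non_unit _ (isUnit_natCast_iff.not_left.2 h)

lemma coe_inverse_natCast (n : ℕ) :
    (((n : ℤ_[p])⁻¹ʳ : ℤ_[p]) : ℚ_[p]) = if p ∣ n then 0 else (n : ℚ_[p])⁻¹ := by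
  split_ifs with h
  · rw [inverse_natCast_of_dvd h, PadicInt.coe_zero]
  · exact eq_inv_of_mul_eq_one_right (by exact_mod_cast congrArg _ (natCast_mul_inverse h))

lemma toZMod_inverse_natCast (n : ℕ) : PadicInt.toZMod (n : ℤ_[p])⁻¹ʳ = (n : ZMod p)⁻¹ := by
  by_cases h : p ∣ n
  · rw [inverse_natCast_of_dvd h, map_zero, (ZMod.natCast_eq_zero_iff n p).2 h, inv_zero]
  · exact eq_inv_of_mul_eq_one_right
      (by simpa using congrArg PadicInt.toZMod (natCast_mul_inverse h))

lemma map_toZMod_recipSeries :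
    PowerSeries.map PadicInt.toZMod (recipSeries ℤ_[p]) = recipSeries (ZMod p) := by
  ext n
  simp [toZMod_inverse_natCast]

lemma toZMod_eq_zero_iff_dvd {x : ℤ_[p]} : PadicInt.toZMod x = 0 ↔ (p : ℤ_[p]) ∣ x := by
  rw [← RingHom.mem_ker, PadicInt.ker_toZMod, PadicInt.maximalIdeal_eq_span_p,
    Ideal.mem_span_singleton]

lemma ratCong_of_pow_dvd_sub {r : ℕ} {x y : ℚ} {a b : ℤ_[p]} (ha : (x : ℚ_[p]) = a)
    (hb : (y : ℚ_[p]) = b) (h : (p : ℤ_[p]) ^ r ∣ a - b) : ratCong p r x y := by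
  obtain ⟨c, hc⟩ := h
  have hp : p ≠ 0 := Nat.Prime.ne_zero Fact.out
  refine ⟨(x - y) / (p : ℚ) ^ r, by field_simp, ?_⟩
  have hz : (((x - y) / (p : ℚ) ^ r : ℚ) : ℚ_[p]) = c := by
    push_cast
    rw [ha, hb, ← PadicInt.coe_sub, hc]
    push_cast
    field_simp
  exact isUnit_natCast_iff.1 (PadicInt.isUnit_den _ (hz ▸ c.norm_le_one))

end PadicInt

lemma hsum_eq_coeff_pow (p k N : ℕ) :
    hsum p k N = coeff N ((mk fun n => if p ∣ n then 0 else (n : ℚ)⁻¹) ^ k) := by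
  have hprod (l : Fin k → ℕ) : ∏ i, (if p ∣ l i then 0 else (l i : ℚ)⁻¹) =
      if ∀ i, ¬p ∣ l i then ∏ i, (1 : ℚ) / l i else 0 := by
    simp_rw [← ite_not (p ∣ _), one_div, prod_ite_zero, mem_univ, forall_true_left]
  rw [← Fin.prod_const, coeff_prod, hsum]
  simp_rw [coeff_mk, hprod, ← sum_filter]
  refine sum_bij' (fun l _ => Finsupp.equivFunOnFinite.symm l) (fun l _ => ⇑l) ?_ ?_
    (fun _ _ => rfl) (fun l _ => Finsupp.equivFunOnFinite.symm_apply_apply l) (fun _ _ => rfl)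
  · intro l hl
    simp_all
  · intro l hl
    obtain ⟨hl, hpl⟩ := mem_filter.1 hl
    obtain ⟨hsum, -⟩ := mem_finsuppAntidiag.1 hl
    simp only [mem_filter, Fintype.mem_piFinset, mem_Icc]
    refine ⟨fun i => ⟨Nat.pos_of_ne_zero fun h => hpl i (h ▸ dvd_zero p), ?_⟩, hsum, hpl⟩
    exact hsum ▸ single_le_sum (f := ⇑l) (fun _ _ => Nat.zero_le _) (mem_univ i)

lemma cast_hsum_eq_coeff_recipSeries_pow (p k N : ℕ) [Fact p.Prime] :
    (hsum p k N : ℚ_[p]) = (coeff N (recipSeries ℤ_[p] ^ k) : ℤ_[p]) := by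
  have hmap : PowerSeries.map (Rat.castHom ℚ_[p]) (mk fun n => if p ∣ n then 0 else (n : ℚ)⁻¹) =
      PowerSeries.map PadicInt.Coe.ringHom (recipSeries ℤ_[p]) := by
    ext n
    simp only [coeff_map, coeff_mk, coeff_recipSeries]
    refine Eq.trans ?_ (coe_inverse_natCast n).symm
    split_ifs <;> simp
  have := congrArg (fun φ => coeff N (φ ^ k)) hmap
  simp only [← map_pow, coeff_map] at this
  rwa [hsum_eq_coeff_pow]

end RecipSeries

section ForwardDifference

open PowerSeries

variable {R : Type*} [CommRing R]

lemma fwdDiff_coeff_mul (q : ℕ) (φ ψ : R⟦X⟧) :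
    Δ_[q] (fun n => coeff n (φ * ψ)) =
      (fun n => coeff n (mk (Δ_[q] fun n => coeff n φ) * ψ)) +
        ∑ a ∈ range q, coeff a φ • fun n => coeff (n + (q - a)) ψ := by
  ext n
  have hsplit : coeff (n + q) (φ * ψ) =
      ∑ a ∈ range q, coeff a φ * coeff (n + (q - a)) ψ +
        ∑ a ∈ range (n + 1), coeff (a + q) φ * coeff (n - a) ψ := by
    rw [coeff_mul, Nat.sum_antidiagonal_eq_sum_range_succ fun a b => coeff a φ * coeff b ψ,
      show (n + q).succ = q + (n + 1) by omega, sum_range_add]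
    congr 1 <;> refine sum_congr rfl fun a ha => ?_
    · rw [← Nat.add_sub_assoc (mem_range.1 ha).le]
    · rw [add_comm q a, Nat.add_sub_add_right]
  have hmul (χ : R⟦X⟧) : coeff n (χ * ψ) = ∑ a ∈ range (n + 1), coeff a χ * coeff (n - a) ψ := by
    rw [coeff_mul, Nat.sum_antidiagonal_eq_sum_range_succ fun a b => coeff a χ * coeff b ψ]
  simp only [fwdDiff, hsplit, hmul, Pi.add_apply, Finset.sum_apply, Pi.smul_apply, smul_eq_mul,
    coeff_mk, sub_mul, sum_sub_distrib]
  ring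

/-- The shift `c` is there for the induction on `i`, which replaces `φ` by its difference. -/
lemma pow_dvd_fwdDiff_iter_coeff_mul {q c d : ℕ} {φ ψ : R⟦X⟧}
    (hφ : ∀ i n, (q : R) ^ (i + c) ∣ Δ_[q] ^[i] (fun n => coeff n φ) n)
    (hψ : ∀ i n, (q : R) ^ (i - d) ∣ Δ_[q] ^[i] (fun n => coeff n ψ) n) (i n : ℕ) :
    (q : R) ^ (i + c - (d + 1)) ∣ Δ_[q] ^[i] (fun n => coeff n (φ * ψ)) n := by
  have hφ₀ (n : ℕ) : (q : R) ^ c ∣ coeff n φ := by simpa using hφ 0 n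
  induction i generalizing c φ with
  | zero =>
    simp only [Function.iterate_zero, id, coeff_mul]
    exact dvd_sum fun ab _ => ((pow_dvd_pow _ (by omega)).trans (hφ₀ ab.1)).mul_right _
  | succ i ih =>
    rw [Function.iterate_succ_apply, fwdDiff_coeff_mul, fwdDiff_iter_add, fwdDiff_iter_finsetSum]
    refine dvd_add ?_ ?_
    · refine (pow_dvd_pow _ (by omega)).trans (ih (c := c + 1) (fun j n => ?_) fun n => ?_)
      · simpa only [coeff_mk, ← Function.iterate_succ_apply, Nat.succ_add_eq_add_succ]
          using hφ (j + 1) n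
      · simpa only [coeff_mk, add_comm, Function.iterate_one] using hφ 1 n
    · rw [Finset.sum_apply]
      refine dvd_sum fun a _ => ?_
      rw [fwdDiff_iter_const_smul, Pi.smul_apply, smul_eq_mul,
        fwdDiff_iter_comp_add q (fun n => coeff n ψ)]
      refine (pow_dvd_pow _ (by omega : i + 1 + c - (d + 1) ≤ c + (i - d))).trans ?_
      rw [pow_add]
      exact mul_dvd_mul (hφ₀ a) (hψ i _)

variable {p : ℕ} [Fact p.Prime]

lemma prod_mul_fwdDiff_iter_inverse {q : ℕ} (hq : p ∣ q) (i : ℕ) {n : ℕ} (hn : ¬p ∣ n) :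
    (∏ j ∈ range (i + 1), ((n : ℤ_[p]) + j * q)) * Δ_[q] ^[i] (fun n : ℕ => (n : ℤ_[p])⁻¹ʳ) n =
      (-1) ^ i * i.factorial * (q : ℤ_[p]) ^ i := by
  induction i generalizing n with
  | zero => simpa using natCast_mul_inverse hn
  | succ i ih =>
    have hlast := prod_range_succ (fun j : ℕ => (n : ℤ_[p]) + j * q) (i + 1)
    have hfirst : ∏ j ∈ range (i + 2), ((n : ℤ_[p]) + j * q) =
        (∏ j ∈ range (i + 1), (((n + q : ℕ) : ℤ_[p]) + j * q)) * n := by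
      rw [prod_range_succ']
      congr 1 <;> push_cast
      · exact prod_congr rfl fun j _ => by ring
      · ring
    rw [Function.iterate_succ_apply', fwdDiff, mul_sub]
    nth_rewrite 1 [hfirst]
    rw [hlast, mul_right_comm _ (n : ℤ_[p]), ih ((Nat.dvd_add_left hq).not.2 hn),
      mul_right_comm _ (_ + _ : ℤ_[p]), ih hn,
      Nat.factorial_succ]
    push_cast
    ring

lemma pow_dvd_fwdDiff_iter_inverse {q : ℕ} (hq : p ∣ q) (i n : ℕ) :
    (q : ℤ_[p]) ^ i ∣ Δ_[q] ^[i] (fun n : ℕ => (n : ℤ_[p])⁻¹ʳ) n := by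
  have hshift (j : ℕ) : p ∣ n + j * q ↔ p ∣ n := Nat.dvd_add_left (hq.mul_left j)
  by_cases hn : p ∣ n
  · rw [fwdDiff_iter_eq_sum_shift]
    refine dvd_sum fun j _ => ?_
    rw [smul_eq_mul j, inverse_natCast_of_dvd ((hshift j).2 hn), smul_zero]
    exact dvd_zero _
  · have hunit : IsUnit (∏ j ∈ range (i + 1), ((n : ℤ_[p]) + j * q)) :=
      (IsUnit.submonoid _).prod_mem fun j _ => by
        exact_mod_cast isUnit_natCast_iff.2 ((hshift j).not.2 hn)
    rw [← hunit.dvd_mul_left, prod_mul_fwdDiff_iter_inverse hq i hn]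
    exact dvd_mul_left _ _

lemma pow_dvd_fwdDiff_iter_coeff_recipSeries_pow {q : ℕ} (hq : p ∣ q) (d i n : ℕ) :
    (q : ℤ_[p]) ^ (i - d) ∣
      Δ_[q] ^[i] (fun n => coeff n (recipSeries ℤ_[p] ^ (d + 1))) n := by
  have hbase (i n : ℕ) : (q : ℤ_[p]) ^ i ∣ Δ_[q] ^[i] (fun n => coeff n (recipSeries ℤ_[p])) n := by
    simpa only [coeff_recipSeries] using pow_dvd_fwdDiff_iter_inverse hq i n
  induction d generalizing i n with
  | zero => simpa using hbase i n
  | succ d ih =>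
    rw [pow_succ' _ (d + 1)]
    exact pow_dvd_fwdDiff_iter_coeff_mul (c := 0) hbase ih i n

end ForwardDifference

section Newton

lemma cast_choose_pow_sub_one (R : Type*) [CommRing R] {p : ℕ} [CharP R p] (hp : p.Prime)
    {k m : ℕ} (hm : m < p ^ k) : ((p ^ k - 1).choose m : R) = (-1) ^ m := by
  have hpos : 0 < p ^ k := pow_pos hp.pos k
  induction m with
  | zero => simp
  | succ m ih =>
    have hpascal : (p ^ k).choose (m + 1) = (p ^ k - 1).choose m + (p ^ k - 1).choose (m + 1) := by
      rw [← Nat.choose_succ_succ', Nat.sub_add_cancel hpos]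
    have hzero : ((p ^ k).choose (m + 1) : R) = 0 :=
      (CharP.cast_eq_zero_iff R p _).2 (hp.dvd_choose_pow m.succ_ne_zero hm.ne)
    rw [hpascal, Nat.cast_add, ih (by omega)] at hzero
    rw [pow_succ, mul_neg_one, eq_neg_of_add_eq_zero_right hzero]

lemma dvd_mul_choose (n i : ℕ) : n ∣ i * n.choose i := by
  cases n with
  | zero => cases i <;> simp
  | succ n =>
    cases i with
    | zero => simp
    | succ i => exact ⟨n.choose i, by rw [Nat.add_one_mul_choose_eq, mul_comm]⟩

variable {p : ℕ} [Fact p.Prime]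

lemma pow_dvd_choose_succ_sub {k i : ℕ} (hi : i + 1 < p) (hk : k ≠ 0) :
    (p : ℤ_[p]) ^ (k + 1) ∣
      ((p ^ k).choose (i + 1) : ℤ_[p]) - p ^ k * ((-1) ^ i * ((i + 1 : ℕ) : ℤ_[p])⁻¹ʳ) := by
  have hp : p.Prime := Fact.out
  have hndvd : ¬p ∣ i + 1 := fun h => absurd (Nat.le_of_dvd i.succ_pos h) (by omega)
  have habsorb : (p : ℤ_[p]) ^ k * ((p ^ k - 1).choose i : ℤ_[p]) =
      (p ^ k).choose (i + 1) * (i + 1 : ℕ) := by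
    have := Nat.add_one_mul_choose_eq (p ^ k - 1) i
    rw [Nat.sub_add_cancel (pow_pos hp.pos k)] at this
    exact_mod_cast this
  have hsign : (p : ℤ_[p]) ∣ ((p ^ k - 1).choose i : ℤ_[p]) - (-1) ^ i := by
    rw [← toZMod_eq_zero_iff_dvd]
    have : i < p ^ k := (by omega : i < p).trans_le (Nat.le_self_pow hk p)
    simp [cast_choose_pow_sub_one (ZMod p) hp this]
  have : ((p ^ k).choose (i + 1) : ℤ_[p]) - p ^ k * ((-1) ^ i * ((i + 1 : ℕ) : ℤ_[p])⁻¹ʳ) =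
      p ^ k * (((p ^ k - 1).choose i : ℤ_[p]) - (-1) ^ i) * ((i + 1 : ℕ) : ℤ_[p])⁻¹ʳ := by
    linear_combination (-((i + 1 : ℕ) : ℤ_[p])⁻¹ʳ) * habsorb
      - ((p ^ k).choose (i + 1) : ℤ_[p]) * natCast_mul_inverse hndvd
  rw [this, pow_succ]
  exact (mul_dvd_mul_left _ hsign).mul_right _

lemma pow_dvd_choose_mul {k i d : ℕ} (hd : d + 1 < p) (hi : d < i) {x : ℤ_[p]}
    (hx : (p : ℤ_[p]) ^ (i - d) ∣ x) : (p : ℤ_[p]) ^ (k + 1) ∣ (p ^ k).choose i * x := by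
  have hp : p.Prime := Fact.out
  obtain ⟨v, i', hi', rfl⟩ := Nat.exists_eq_pow_mul_and_not_dvd (Nat.ne_zero_of_lt hi) p hp.ne_one
  have hchoose : p ^ k ∣ p ^ v * (p ^ k).choose (p ^ v * i') := by
    refine Nat.Coprime.dvd_of_dvd_mul_left (m := i')
      (((hp.coprime_iff_not_dvd).2 hi').pow_left k) ?_
    rw [← mul_assoc, mul_comm i']
    exact dvd_mul_choose _ _
  have hle : v + 1 ≤ p ^ v * i' - d := by
    cases v with
    | zero => omega
    | succ v =>
      have hpos : 0 < i' := Nat.pos_of_ne_zero (by rintro rfl; simp at hi')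
      have : p + v ≤ p ^ (v + 1) := by
        have hv : v < p ^ v := Nat.lt_pow_self hp.one_lt
        rw [pow_succ]
        nlinarith [hp.two_le]
      have := Nat.le_mul_of_pos_right (p ^ (v + 1)) hpos
      omega
  obtain ⟨y, rfl⟩ := (pow_dvd_pow _ hle).trans hx
  obtain ⟨c, hc⟩ := hchoose
  refine ⟨c * y, ?_⟩
  have hcast : (p : ℤ_[p]) ^ v * ((p ^ k).choose (p ^ v * i') : ℤ_[p]) = p ^ k * c := by
    exact_mod_cast congrArg (Nat.cast (R := ℤ_[p])) hc
  linear_combination (p : ℤ_[p]) * y * hcast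

/-- In Newton's formula for `g (pᵏ • p)`, the `i`-th difference has coefficient `(pᵏ choose i)`,
which is close to `(-1)ⁱ⁻¹ pᵏ / i` for small `i`; for large `i` the difference itself is small. -/
lemma pow_dvd_sub_newton {k d : ℕ} (hd : d + 1 < p) (hk : k ≠ 0) {g : ℕ → ℤ_[p]}
    (hg : ∀ i, (p : ℤ_[p]) ^ (i - d) ∣ Δ_[p] ^[i] g 0) :
    (p : ℤ_[p]) ^ (k + 1) ∣ g (p ^ (k + 1)) - (g 0 + p ^ k *
      ∑ i ∈ range d, (-1) ^ i * ((i + 1 : ℕ) : ℤ_[p])⁻¹ʳ * Δ_[p] ^[i + 1] g 0) := by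
  have hdk : d ≤ p ^ k := (by omega : d ≤ p).trans (Nat.le_self_pow hk p)
  have hnewton : g (p ^ (k + 1)) = g 0 +
      (∑ i ∈ range d, (p ^ k).choose (i + 1) * Δ_[p] ^[i + 1] g 0 +
        ∑ j ∈ range (p ^ k - d), (p ^ k).choose (d + j + 1) * Δ_[p] ^[d + j + 1] g 0) := by
    have := shift_eq_sum_fwdDiff_iter p g (p ^ k) 0
    rw [zero_add, smul_eq_mul, ← pow_succ, sum_range_succ'] at this
    rw [← sum_range_add (fun i => ((p ^ k).choose (i + 1) : ℤ_[p]) * Δ_[p] ^[i + 1] g 0),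
      Nat.add_sub_cancel' hdk, this, add_comm]
    simp only [Nat.choose_zero_right, nsmul_eq_mul, Nat.cast_one, one_mul, Function.iterate_zero,
      id]
  rw [hnewton, add_sub_add_left_eq_sub, mul_sum, add_sub_right_comm, ← sum_sub_distrib]
  refine dvd_add (dvd_sum fun i hi => ?_) (dvd_sum fun j _ => ?_)
  · rw [← mul_assoc, ← sub_mul]
    exact (pow_dvd_choose_succ_sub (by have := mem_range.1 hi; omega) hk).mul_right _
  · exact pow_dvd_choose_mul hd (by omega) (hg _)

end Newton

section RisingFactorial

open Polynomial

/-- The sum `∑_{a + b = m} (m choose a) X⁽ᵃ⁾ (-X)⁽ᵇ⁾ g(a)`, where `⁽ ⁾` denotes rising factorials,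
as a linear functional of `g`. For `g = 1` it is the left-hand side of the Vandermonde identity. -/
noncomputable def vandermondeSum (R : Type*) [CommRing R] (m : ℕ) : (ℕ → R[X]) →ₗ[R[X]] R[X] :=
  ∑ ab ∈ antidiagonal m, ((m.choose ab.1 : R[X]) *
    (ascPochhammer R ab.1 * (ascPochhammer R ab.2).comp (-X))) • LinearMap.proj ab.1

lemma vandermondeSum_apply {R : Type*} [CommRing R] (m : ℕ) (g : ℕ → R[X]) :
    vandermondeSum R m g = ∑ ab ∈ antidiagonal m, (m.choose ab.1 : R[X]) *
      (ascPochhammer R ab.1 * (ascPochhammer R ab.2).comp (-X)) * g ab.1 := by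
  simp [vandermondeSum, LinearMap.sum_apply]

lemma map_vandermondeSum {R S : Type*} [CommRing R] [CommRing S] (φ : R →+* S) (m : ℕ)
    (g : ℕ → R[X]) :
    (vandermondeSum R m g).map φ = vandermondeSum S m fun a => (g a).map φ := by
  simp [vandermondeSum_apply, Polynomial.map_sum, Polynomial.map_comp]

variable (K : Type*) [Field K] [CharZero K]

lemma one_sub_X_mul_derivative_recipSeries :
    (1 - PowerSeries.X) * PowerSeries.derivative K (recipSeries K) = 1 := by
  have hcoeff (n : ℕ) : PowerSeries.coeff n (PowerSeries.derivative K (recipSeries K)) = 1 := by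
    rw [PowerSeries.coeff_derivative, coeff_recipSeries, Ring.inverse_eq_inv]
    push_cast
    exact inv_mul_cancel₀ n.cast_add_one_ne_zero
  ext n
  rw [sub_mul, one_mul, map_sub, hcoeff]
  cases n with
  | zero => simp
  | succ n => simp [PowerSeries.coeff_succ_X_mul, hcoeff, PowerSeries.coeff_one]

lemma coeff_succ_recipSeries_pow_succ (N n : ℕ) :
    (N + 1) * PowerSeries.coeff (N + 1) (recipSeries K ^ (n + 1)) =
      N * PowerSeries.coeff N (recipSeries K ^ (n + 1)) +
        (n + 1) * PowerSeries.coeff N (recipSeries K ^ n) := by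
  have hderiv : (1 - PowerSeries.X) * PowerSeries.derivative K (recipSeries K ^ (n + 1)) =
      ((n + 1 : ℕ) : K⟦X⟧) * recipSeries K ^ n := by
    rw [PowerSeries.derivative_pow, Nat.add_sub_cancel]
    linear_combination (((n + 1 : ℕ) : K⟦X⟧) * recipSeries K ^ n) *
      one_sub_X_mul_derivative_recipSeries K
  have := congrArg (PowerSeries.coeff N) hderiv
  rw [sub_mul, one_mul, map_sub, PowerSeries.coeff_derivative, ← nsmul_eq_mul, map_nsmul,
    nsmul_eq_mul] at this
  cases N with
  | zero => simpa [mul_comm] using this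
  | succ N =>
    rw [PowerSeries.coeff_succ_X_mul, PowerSeries.coeff_derivative] at this
    push_cast at this ⊢
    linear_combination this

/-- The coefficient-wise form of `(1 - x)⁻ˣ = exp (X u) = ∑ Xⁿ uⁿ / n!` with `u = -log (1 - x)`. -/
lemma factorial_mul_coeff_recipSeries_pow (N n : ℕ) :
    N.factorial * PowerSeries.coeff N (recipSeries K ^ n) =
      n.factorial * (ascPochhammer K N).coeff n := by
  induction N generalizing n with
  | zero => cases n <;> simp [coeff_one]
  | succ N ih =>
    have hrec (n : ℕ) : (ascPochhammer K (N + 1)).coeff (n + 1) =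
        (ascPochhammer K N).coeff n + N * (ascPochhammer K N).coeff (n + 1) := by
      rw [ascPochhammer_succ_right, mul_add, coeff_add, coeff_mul_X, ← C_eq_natCast, coeff_mul_C,
        mul_comm (N : K)]
    cases n with
    | zero => simp [PowerSeries.coeff_one, coeff_zero_eq_eval_zero]
    | succ n =>
      rw [hrec, Nat.factorial_succ, Nat.factorial_succ]
      have h₀ := ih n
      have h₁ := ih (n + 1)
      rw [Nat.factorial_succ] at h₁
      push_cast at h₁ ⊢
      linear_combination (N.factorial : K) * coeff_succ_recipSeries_pow_succ K N n +
        (n + 1) * h₀ + N * h₁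

lemma factorial_mul_coeff_ascPochhammer_comp_mul (c d : K) (M N n : ℕ) :
    n.factorial *
        ((ascPochhammer K M).comp (C c * X) * (ascPochhammer K N).comp (C d * X)).coeff n =
      M.factorial * N.factorial * ∑ ij ∈ antidiagonal n, n.choose ij.1 * (c ^ ij.1 * d ^ ij.2) *
        (PowerSeries.coeff M (recipSeries K ^ ij.1) *
          PowerSeries.coeff N (recipSeries K ^ ij.2)) := by
  rw [coeff_mul, mul_sum, mul_sum]
  refine sum_congr rfl fun ij hij => ?_
  have hchoose : (n.choose ij.1 * ij.1.factorial * ij.2.factorial : K) = n.factorial := by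
    rw [← HasAntidiagonal.mem_antidiagonal.1 hij, Nat.choose_symm_add]
    exact_mod_cast Nat.add_choose_mul_factorial_mul_factorial ij.1 ij.2
  rw [comp_C_mul_X_coeff, comp_C_mul_X_coeff, ← hchoose]
  linear_combination (-(n.choose ij.1 * (c ^ ij.1 * d ^ ij.2)) : K) *
    (N.factorial * PowerSeries.coeff N (recipSeries K ^ ij.2) *
        factorial_mul_coeff_recipSeries_pow K M ij.1 +
      ij.1.factorial * (ascPochhammer K M).coeff ij.1 *
        factorial_mul_coeff_recipSeries_pow K N ij.2)

lemma coeff_mul_expand {R : Type*} [CommRing R] {q : ℕ} (hq : q ≠ 0) (φ ψ : R⟦X⟧) (m : ℕ) :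
    PowerSeries.coeff (q * m) (φ * PowerSeries.expand q hq ψ) =
      ∑ ab ∈ antidiagonal m, PowerSeries.coeff (q * ab.1) φ * PowerSeries.coeff ab.2 ψ := by
  rw [PowerSeries.coeff_mul]
  refine (sum_of_injOn (fun ab : ℕ × ℕ => (q * ab.1, q * ab.2)) ?_ ?_ ?_ ?_).symm
  · rintro ⟨a, b⟩ - ⟨a', b'⟩ - h
    simpa [hq] using h
  · rintro ⟨a, b⟩ h
    simp_all [← mul_add]
  · rintro ⟨a, b⟩ hab hnot
    by_cases hb : q ∣ b
    · rw [HasAntidiagonal.mem_antidiagonal] at hab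
      obtain ⟨b, rfl⟩ := hb
      obtain ⟨a, rfl⟩ := (Nat.dvd_add_left (dvd_mul_right q b)).1 ⟨m, hab⟩
      refine absurd ⟨(a, b), ?_, rfl⟩ hnot
      rw [← mul_add] at hab
      exact HasAntidiagonal.mem_antidiagonal.2
        (Nat.eq_of_mul_eq_mul_left (Nat.pos_of_ne_zero hq) hab)
    · rw [PowerSeries.coeff_expand_of_not_dvd q hq _ hb, mul_zero]
  · rintro ⟨a, b⟩ -
    rw [PowerSeries.coeff_expand_mul]

lemma coeff_sub_expand_pow {R : Type*} [CommRing R] {q : ℕ} (hq : q ≠ 0) (c : R) (φ ψ : R⟦X⟧)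
    (m n : ℕ) :
    PowerSeries.coeff (q * m) ((PowerSeries.C c * φ - PowerSeries.expand q hq ψ) ^ n) =
      ∑ ij ∈ antidiagonal n, ∑ ab ∈ antidiagonal m, n.choose ij.1 * (c ^ ij.1 * (-1) ^ ij.2) *
        (PowerSeries.coeff (q * ab.1) (φ ^ ij.1) * PowerSeries.coeff ab.2 (ψ ^ ij.2)) := by
  rw [sub_eq_add_neg, (Commute.all _ _).add_pow', map_sum]
  refine sum_congr rfl fun ij _ => ?_
  have hterm : (PowerSeries.C c * φ) ^ ij.1 * (-PowerSeries.expand q hq ψ) ^ ij.2 =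
      PowerSeries.C (c ^ ij.1 * (-1) ^ ij.2) *
        (φ ^ ij.1 * PowerSeries.expand q hq (ψ ^ ij.2)) := by
    rw [mul_pow, neg_pow, map_mul, map_pow, map_pow, map_pow, map_neg, map_one]
    ring
  rw [hterm, map_nsmul, nsmul_eq_mul, PowerSeries.coeff_C_mul, coeff_mul_expand, mul_sum, mul_sum]
  exact sum_congr rfl fun ab _ => by ring

lemma factorial_mul_coeff_sub_expand_pow {q : ℕ} (hq : q ≠ 0) {E : ℕ → K[X]}
    (hE : ∀ a, a.factorial * (ascPochhammer K (q * a)).comp (C (q : K) * X) =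
      (q * a).factorial * (ascPochhammer K a * E a)) (m n : ℕ) :
    m.factorial * PowerSeries.coeff (q * m)
        ((PowerSeries.C (q : K) * recipSeries K - PowerSeries.expand q hq (recipSeries K)) ^ n) =
      n.factorial * (vandermondeSum K m E).coeff n := by
  rw [coeff_sub_expand_pow, sum_comm, vandermondeSum_apply, finsetSum_coeff, mul_sum, mul_sum]
  refine sum_congr rfl fun ab hab => ?_
  have hchoose : (m.choose ab.1 * ab.1.factorial * ab.2.factorial : K) = m.factorial := by
    rw [← HasAntidiagonal.mem_antidiagonal.1 hab, Nat.choose_symm_add]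
    exact_mod_cast Nat.add_choose_mul_factorial_mul_factorial ab.1 ab.2
  have hcoeff : (ab.1.factorial : K) * ((ascPochhammer K (q * ab.1)).comp (C (q : K) * X) *
      (ascPochhammer K ab.2).comp (-X)).coeff n = (q * ab.1).factorial *
        (ascPochhammer K ab.1 * (ascPochhammer K ab.2).comp (-X) * E ab.1).coeff n := by
    rw [← coeff_natCast_mul, ← mul_assoc, hE, ← coeff_natCast_mul]
    ring_nf
  have hprod := factorial_mul_coeff_ascPochhammer_comp_mul K q (-1) (q * ab.1) ab.2 n
  rw [map_neg, map_one, neg_one_mul] at hprod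
  rw [mul_assoc, coeff_natCast_mul]
  refine mul_left_cancel₀ (Nat.cast_ne_zero.2 (q * ab.1).factorial_ne_zero : _ ≠ (0 : K)) ?_
  linear_combination (n.factorial * m.choose ab.1 : K) * hcoeff -
    (ab.1.factorial * m.choose ab.1 : K) * hprod - ((q * ab.1).factorial * ∑ ij ∈ antidiagonal n,
      n.choose ij.1 * ((q : K) ^ ij.1 * (-1) ^ ij.2) *
        (PowerSeries.coeff (q * ab.1) (recipSeries K ^ ij.1) *
          PowerSeries.coeff ab.2 (recipSeries K ^ ij.2))) * hchoose

end RisingFactorial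

section RecipProd

open Polynomial

lemma ascPochhammer_zmod_self (p : ℕ) [Fact p.Prime] :
    ascPochhammer (ZMod p) p = X ^ p - X := by
  have hp : p.Prime := Fact.out
  have hdeg : (ascPochhammer (ZMod p) p).degree = p := by
    rw [degree_eq_natDegree (Monic.ne_zero (monic_ascPochhammer _ _)), ascPochhammer_natDegree]
  have hdeg' : (X ^ p - X : (ZMod p)[X]).degree = p := by
    rw [degree_sub_eq_left_of_degree_lt] <;> simp [hp.one_lt]
  refine eq_of_degree_le_of_eval_finset_eq univ ?_ (hdeg.trans hdeg'.symm) ?_ fun x _ => ?_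
  · rw [hdeg, card_univ, ZMod.card]
  · rw [(monic_ascPochhammer _ _).leadingCoeff, leadingCoeff_sub_of_degree_lt,
      leadingCoeff_X_pow]
    simp [hp.one_lt]
  · have hx : x = -((-x).val : ZMod p) := by simp
    rw [hx, ascPochhammer_eval_neg_coe_nat_of_lt (ZMod.val_lt _), ← hx]
    simp

/-- The polynomial `∏ (1 + X / k)` over `0 < k < p`, which is the rising factorial
`X (X + 1) ⋯ (X + p - 1)` divided by `(p - 1)! X`. -/
noncomputable def recipProd (p : ℕ) [Fact p.Prime] : ℤ_[p][X] :=
  ∏ k ∈ range (p - 1), (1 + C ((k + 1 : ℕ) : ℤ_[p])⁻¹ʳ * X)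

lemma not_dvd_of_mem_range_pred {p k : ℕ} (hk : k ∈ range (p - 1)) : ¬p ∣ k + 1 :=
  Nat.not_dvd_of_pos_of_lt k.succ_pos (by have := mem_range.1 hk; omega)

variable {p : ℕ} [Fact p.Prime]

lemma eval_zero_recipProd : (recipProd p).eval 0 = 1 := by
  simp [recipProd, eval_prod]

lemma ascPochhammer_comp_X_add_one_eq_recipProd :
    (ascPochhammer ℤ_[p] (p - 1)).comp (X + 1) = ((p - 1).factorial : ℤ_[p][X]) * recipProd p := by
  have hasc (n : ℕ) : (ascPochhammer ℤ_[p] n).comp (X + 1) =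
      ∏ k ∈ range n, (X + ((k + 1 : ℕ) : ℤ_[p][X])) := by
    induction n with
    | zero => simp
    | succ n ih =>
      rw [ascPochhammer_succ_right, mul_comp, ih, prod_range_succ, add_comp, X_comp, natCast_comp,
        Nat.cast_succ, add_assoc, add_comm (1 : ℤ_[p][X])]
  rw [hasc, recipProd, ← prod_range_add_one_eq_factorial, Nat.cast_prod, ← prod_mul_distrib]
  refine prod_congr rfl fun k hk => ?_
  have hinv := congrArg (C : ℤ_[p] → ℤ_[p][X]) (natCast_mul_inverse (not_dvd_of_mem_range_pred hk))
  rw [C_mul, C_1, C_eq_natCast] at hinv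
  linear_combination (-X) * hinv

lemma ascPochhammer_eq_X_mul_recipProd :
    ascPochhammer ℤ_[p] p = X * (((p - 1).factorial : ℤ_[p][X]) * recipProd p) := by
  rw [← ascPochhammer_comp_X_add_one_eq_recipProd, ← ascPochhammer_succ_left,
    Nat.sub_add_cancel (Nat.Prime.one_le Fact.out)]

lemma map_toZMod_recipProd : (recipProd p).map PadicInt.toZMod = 1 - X ^ (p - 1) := by
  have hp : p.Prime := Fact.out
  have h := congrArg (Polynomial.map PadicInt.toZMod) (ascPochhammer_eq_X_mul_recipProd (p := p))
  rw [ascPochhammer_map, ascPochhammer_zmod_self, Polynomial.map_mul, Polynomial.map_mul, map_X,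
    Polynomial.map_natCast, ← C_eq_natCast, ZMod.wilsons_lemma, C_neg, C_1] at h
  have hpow : (X : (ZMod p)[X]) ^ p = X * X ^ (p - 1) := by
    rw [← pow_succ', Nat.sub_add_cancel hp.one_le]
  refine mul_left_cancel₀ (X_ne_zero (R := ZMod p)) ?_
  linear_combination h - hpow

lemma isUnit_of_dvd_sub_one {x : ℤ_[p]} (h : (p : ℤ_[p]) ∣ x - 1) : IsUnit x := by
  refine IsLocalRing.isUnit_of_mem_nonunits_one_sub_self x ?_
  rwa [PadicInt.mem_nonunits, PadicInt.norm_lt_one_iff_dvd, ← dvd_neg, neg_sub]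

lemma isUnit_eval_recipProd (n : ℕ) : IsUnit ((recipProd p).eval ((p * n : ℕ) : ℤ_[p])) := by
  refine isUnit_of_dvd_sub_one ?_
  rw [← eval_zero_recipProd (p := p)]
  refine dvd_trans ?_ (sub_dvd_eval_sub _ _ _)
  simp

lemma factorial_mul_add_eq_recipProd (a : ℕ) :
    (((p * (a + 1)).factorial : ℕ) : ℤ_[p]) = (p * a).factorial * (p * (a + 1)) *
      ((p - 1).factorial * (recipProd p).eval ((p * a : ℕ) : ℤ_[p])) := by
  have h := congrArg (eval ((p * a : ℕ) : ℤ_[p]))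
    (ascPochhammer_comp_X_add_one_eq_recipProd (p := p))
  rw [eval_comp, eval_add, eval_X, eval_one, eval_mul, eval_natCast] at h
  have hsucc : p * (a + 1) = p * a + (p - 1) + 1 := by
    rw [mul_add_one, add_assoc, Nat.sub_add_cancel (Nat.Prime.one_le Fact.out)]
  rw [← h, mul_right_comm, factorial_mul_ascPochhammer, hsucc, Nat.factorial_succ, ← hsucc]
  push_cast
  ring

/-- The quotient of `(pX)⁽ᵖᵃ⁾ / (pa)!` by `X⁽ᵃ⁾ / a!`, where `⁽ ⁾` denotes rising factorials,
written as a product so that it has coefficients in `ℤ_[p]`. -/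
noncomputable def pochhammerRatio (p : ℕ) [Fact p.Prime] (a : ℕ) : ℤ_[p][X] :=
  ∏ i ∈ range a, C ((recipProd p).eval ((p * i : ℕ) : ℤ_[p]))⁻¹ʳ *
    (recipProd p).comp (C (p : ℤ_[p]) * (X + C (i : ℤ_[p])))

lemma pochhammerRatio_succ (a : ℕ) : pochhammerRatio p (a + 1) = pochhammerRatio p a *
    (C ((recipProd p).eval ((p * a : ℕ) : ℤ_[p]))⁻¹ʳ *
      (recipProd p).comp (C (p : ℤ_[p]) * (X + C (a : ℤ_[p])))) :=
  prod_range_succ _ _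

lemma factorial_mul_ascPochhammer_comp_eq_pochhammerRatio (a : ℕ) :
    (a.factorial : ℤ_[p][X]) * (ascPochhammer ℤ_[p] (p * a)).comp (C (p : ℤ_[p]) * X) =
      (p * a).factorial * (ascPochhammer ℤ_[p] a * pochhammerRatio p a) := by
  induction a with
  | zero => simp [pochhammerRatio]
  | succ a ih =>
    have hcancel := congrArg C (Ring.mul_inverse_cancel _ (isUnit_eval_recipProd (p := p) a))
    have hfactorial := congrArg C (factorial_mul_add_eq_recipProd (p := p) a)
    have hcomp : (ascPochhammer ℤ_[p] (p * (a + 1))).comp (C (p : ℤ_[p]) * X) =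
        (ascPochhammer ℤ_[p] (p * a)).comp (C (p : ℤ_[p]) * X) *
          (C (p : ℤ_[p]) * (X + C (a : ℤ_[p])) * (((p - 1).factorial : ℤ_[p][X]) *
            (recipProd p).comp (C (p : ℤ_[p]) * (X + C (a : ℤ_[p]))))) := by
      have harg : C (p : ℤ_[p]) * X + ((p * a : ℕ) : ℤ_[p][X]) =
          C (p : ℤ_[p]) * (X + C (a : ℤ_[p])) := by
        simp [mul_add]
      rw [mul_add_one, ← ascPochhammer_mul, mul_comp, comp_assoc, add_comp, X_comp, natCast_comp,
        harg, ascPochhammer_eq_X_mul_recipProd, mul_comp, X_comp, mul_comp, natCast_comp]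
    rw [hcomp, pochhammerRatio_succ, ascPochhammer_succ_right, Nat.factorial_succ]
    simp only [C_mul, C_1, C_add, C_eq_natCast, Nat.cast_mul, Nat.cast_add, Nat.cast_one] at *
    rw [hfactorial]
    linear_combination (a + 1) * ((p : ℤ_[p][X]) * (X + a) * (((p - 1).factorial : ℤ_[p][X]) *
      (recipProd p).comp ((p : ℤ_[p][X]) * (X + (a : ℤ_[p][X]))))) * (ih - (p * a).factorial *
        (ascPochhammer ℤ_[p] a * pochhammerRatio p a) * hcancel)

end RecipProd

section PochhammerRatio

open Polynomial

variable {p : ℕ} [Fact p.Prime]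

lemma C_mul_map_recipSeries (hp : p ≠ 0) :
    PowerSeries.C (p : ℚ_[p]) * (recipSeries ℤ_[p]).map PadicInt.Coe.ringHom =
      PowerSeries.C (p : ℚ_[p]) * recipSeries ℚ_[p] -
        PowerSeries.expand p hp (recipSeries ℚ_[p]) := by
  ext n
  rw [map_sub, PowerSeries.coeff_C_mul, PowerSeries.coeff_C_mul, PowerSeries.coeff_map,
    coeff_recipSeries, coeff_recipSeries, Ring.inverse_eq_inv]
  refine (congrArg _ (coe_inverse_natCast n)).trans ?_
  split_ifs with h
  · obtain ⟨k, rfl⟩ := h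
    rw [PowerSeries.coeff_expand_mul, coeff_recipSeries, Ring.inverse_eq_inv]
    push_cast
    rw [mul_inv, mul_inv_cancel_left₀ (Nat.cast_ne_zero.2 hp), mul_zero, sub_self]
  · rw [PowerSeries.coeff_expand_of_not_dvd p hp _ h, sub_zero]

lemma factorial_mul_pow_mul_coeff_recipSeries_pow (m n : ℕ) :
    (m.factorial : ℤ_[p]) * (p ^ n * PowerSeries.coeff (p * m) (recipSeries ℤ_[p] ^ n)) =
      n.factorial * (vandermondeSum ℤ_[p] m (pochhammerRatio p)).coeff n := by
  have hp : p ≠ 0 := Nat.Prime.ne_zero Fact.out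
  have hratio (a : ℕ) : (a.factorial : ℚ_[p][X]) *
      (ascPochhammer ℚ_[p] (p * a)).comp (C (p : ℚ_[p]) * X) = (p * a).factorial *
        (ascPochhammer ℚ_[p] a * (pochhammerRatio p a).map PadicInt.Coe.ringHom) := by
    simpa [Polynomial.map_comp] using congrArg (Polynomial.map PadicInt.Coe.ringHom)
      (factorial_mul_ascPochhammer_comp_eq_pochhammerRatio (p := p) a)
  have h := factorial_mul_coeff_sub_expand_pow ℚ_[p] hp hratio m n
  rw [← C_mul_map_recipSeries, mul_pow, ← map_pow, ← map_pow, PowerSeries.coeff_C_mul,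
    PowerSeries.coeff_map, ← map_vandermondeSum, coeff_map] at h
  refine (show Function.Injective (PadicInt.Coe.ringHom (p := p)) from Subtype.coe_injective) ?_
  simpa using h

end PochhammerRatio

section RecipProdExpansion

open Polynomial

variable {p : ℕ} [Fact p.Prime]

/-- Pairing the factors `k` and `p - k` writes `recipProd p` in terms of `X (X + p)`. -/
lemma exists_comp_eq_recipProd (hp : Odd p) :
    ∃ H : ℤ_[p][X], H.comp (X ^ 2 + C (p : ℤ_[p]) * X) = recipProd p := by
  obtain ⟨h, hh⟩ := hp
  let u (k : ℕ) : ℤ_[p] := ((k + 1 : ℕ) : ℤ_[p])⁻¹ʳ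
  have hpair {k : ℕ} (hk : k ∈ range h) : u k + u (h + (h - 1 - k)) =
      p * (u k * u (h + (h - 1 - k))) := by
    have hk' := mem_range.1 hk
    have h₁ : ((k + 1 : ℕ) : ℤ_[p]) * u k = 1 :=
      natCast_mul_inverse (not_dvd_of_mem_range_pred (mem_range.2 (by omega)))
    have h₂ : ((h + (h - 1 - k) + 1 : ℕ) : ℤ_[p]) * u (h + (h - 1 - k)) = 1 :=
      natCast_mul_inverse (not_dvd_of_mem_range_pred (mem_range.2 (by omega)))
    have hsum : ((k + 1 : ℕ) : ℤ_[p]) + ((h + (h - 1 - k) + 1 : ℕ) : ℤ_[p]) = p := by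
      rw [← Nat.cast_add]
      congr 1
      omega
    linear_combination (-u (h + (h - 1 - k))) * h₁ - u k * h₂ +
      u k * u (h + (h - 1 - k)) * hsum
  refine ⟨∏ k ∈ range h, (1 + C (u k * u (h + (h - 1 - k))) * X), ?_⟩
  rw [recipProd, show p - 1 = h + h by omega, prod_range_add,
    ← prod_range_reflect (fun k => 1 + C ((h + k + 1 : ℕ) : ℤ_[p])⁻¹ʳ * X), ← prod_mul_distrib,
    Polynomial.prod_comp]
  refine prod_congr rfl fun k hk => ?_
  have hC := congrArg C (hpair hk)
  rw [C_add, C_mul, C_mul] at hC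
  rw [add_comp, one_comp, mul_comp, C_comp, X_comp, C_mul]
  linear_combination (-X) * hC

/-- Modulo `p`, the polynomial `H` is `1 - X ^ ((p - 1) / 2)`. -/
lemma dvd_coeff_of_comp_eq_recipProd {H : ℤ_[p][X]}
    (hH : H.comp (X ^ 2 + C (p : ℤ_[p]) * X) = recipProd p) {i : ℕ} (hi : i ≠ 0)
    (hip : 2 * i < p - 1) : (p : ℤ_[p]) ∣ H.coeff i := by
  have hmap := congrArg (Polynomial.map PadicInt.toZMod) hH
  rw [map_toZMod_recipProd, Polynomial.map_comp, Polynomial.map_add, Polynomial.map_mul, map_C,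
    map_natCast, CharP.cast_eq_zero, C_0, zero_mul, add_zero, Polynomial.map_pow, map_X,
    ← expand_eq_comp_X_pow] at hmap
  rw [← toZMod_eq_zero_iff_dvd, ← coeff_map, ← coeff_expand_mul' two_pos, hmap, coeff_sub,
    coeff_one, coeff_X_pow, if_neg (by omega), if_neg (by omega), sub_zero]

lemma exists_recipProd_comp_smodEq (hp : 7 < p) : ∃ α β : ℤ_[p], ∀ t : ℤ_[p][X],
    (recipProd p).comp (C (p : ℤ_[p]) * t) ≡
      1 + C (p : ℤ_[p]) ^ 3 * (C α * (t ^ 2 + t)) + C (p : ℤ_[p]) ^ 5 * (C β * (t ^ 2 + t) ^ 2)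
      [SMOD Ideal.span {C (p : ℤ_[p]) ^ 7}] := by
  obtain ⟨H, hH⟩ := exists_comp_eq_recipProd
    ((Fact.out : p.Prime).odd_of_ne_two (by omega))
  obtain ⟨α, hα⟩ := dvd_coeff_of_comp_eq_recipProd hH one_ne_zero (by omega)
  obtain ⟨β, hβ⟩ := dvd_coeff_of_comp_eq_recipProd hH two_ne_zero (by omega)
  obtain ⟨γ, hγ⟩ := dvd_coeff_of_comp_eq_recipProd hH three_ne_zero (by omega)
  have hone : H.coeff 0 = 1 := by
    rw [coeff_zero_eq_eval_zero, ← eval_zero_recipProd (p := p), ← hH]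
    simp [eval_comp]
  have hdvd : X ^ 4 ∣ H - (1 + C (p : ℤ_[p]) * (C α * X + C β * X ^ 2 + C γ * X ^ 3)) := by
    refine X_pow_dvd_iff.2 fun i hi => ?_
    interval_cases i <;> simp [coeff_one, coeff_X, coeff_X_pow, hone, hα, hβ, hγ]
  obtain ⟨ρ, hρ⟩ := hdvd
  refine ⟨α, β, fun t => ?_⟩
  rw [SModEq.sub_mem, Ideal.mem_span_singleton, ← hH, sub_eq_iff_eq_add.1 hρ]
  refine ⟨C γ * (t ^ 2 + t) ^ 3 + C (p : ℤ_[p]) * (t ^ 2 + t) ^ 4 *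
    ρ.comp (C (p : ℤ_[p]) ^ 2 * (t ^ 2 + t)), ?_⟩
  have harg : (X ^ 2 + C (p : ℤ_[p]) * X).comp (C (p : ℤ_[p]) * t) =
      C (p : ℤ_[p]) ^ 2 * (t ^ 2 + t) := by
    rw [add_comp, pow_comp, mul_comp, C_comp, X_comp]
    ring
  rw [comp_assoc, harg]
  simp only [add_comp, mul_comp, pow_comp, one_comp, C_comp, X_comp]
  ring

/-- The exponential of `π³ a + π⁵ b` modulo `π⁷`, where `η` stands for `1 / 2`. -/
def truncExp {R : Type*} [CommRing R] (π η a b : R) : R :=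
  1 + π ^ 3 * a + π ^ 5 * b + π ^ 6 * (η * a ^ 2)

lemma truncExp_mul_smodEq {R : Type*} [CommRing R] (π : R) {η : R} (hη : 2 * η = 1)
    (a b a' b' : R) :
    truncExp π η a b * truncExp π η a' b' ≡ truncExp π η (a + a') (b + b')
      [SMOD Ideal.span {π ^ 7}] := by
  rw [SModEq.sub_mem, Ideal.mem_span_singleton]
  refine ⟨π * (a * b' + b * a') + π ^ 2 * (η * (a * a' ^ 2 + a ^ 2 * a')) + π ^ 3 * (b * b') +
    π ^ 4 * (η * (b * a' ^ 2 + a ^ 2 * b')) + π ^ 5 * (η * a ^ 2 * (η * a' ^ 2)), ?_⟩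
  rw [truncExp, truncExp, truncExp]
  linear_combination (-π ^ 6 * a * a') * hη

lemma smodEq_truncExp_neg_of_mul_eq_one {R : Type*} [CommRing R] {π η : R} (hη : 2 * η = 1)
    {a b u v : R} (huv : u * v = 1) (hv : v ≡ truncExp π η a b [SMOD Ideal.span {π ^ 7}]) :
    u ≡ truncExp π η (-a) (-b) [SMOD Ideal.span {π ^ 7}] := by
  have hone : v * truncExp π η (-a) (-b) ≡ 1 [SMOD Ideal.span {π ^ 7}] := by
    have h := (hv.mul (SModEq.refl _)).trans (truncExp_mul_smodEq π hη a b (-a) (-b))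
    rwa [add_neg_cancel, add_neg_cancel, show truncExp π η 0 0 = 1 by simp [truncExp]] at h
  have h := (SModEq.refl u).mul hone
  rw [← mul_assoc, huv, one_mul, mul_one] at h
  exact h.symm

/-- The truncated exponential which approximates `pochhammerRatio p a` for `π = p`; here `α` and `β`
describe the logarithm of `recipProd p`. -/
noncomputable def truncPochhammerRatio {R : Type*} [CommRing R] (π η α β : R) (a : ℕ) : R[X] :=
  truncExp (C π) (C η) (C α * (C (a : R) * X * (X + C (a : R))))
    (C β * (C (a : R) * X * (X + C (a : R)) * (X ^ 2 + C (a : R) * X + C (a : R) ^ 2 - 1)))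

lemma pochhammerRatio_smodEq_truncPochhammerRatio {η α β : ℤ_[p]} (hη : 2 * η = 1)
    (h : ∀ t : ℤ_[p][X], (recipProd p).comp (C (p : ℤ_[p]) * t) ≡
      truncExp (C (p : ℤ_[p])) (C η) (C α * (t ^ 2 + t)) (C β * (t ^ 2 + t) ^ 2)
      [SMOD Ideal.span {C (p : ℤ_[p]) ^ 7}]) (a : ℕ) :
    pochhammerRatio p a ≡ truncPochhammerRatio (p : ℤ_[p]) η α β a
      [SMOD Ideal.span {C (p : ℤ_[p]) ^ 7}] := by
  have hη' : 2 * (C η : ℤ_[p][X]) = 1 := by rw [← C_ofNat, ← C_mul, hη, C_1]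
  induction a with
  | zero =>
    rw [truncPochhammerRatio, Nat.cast_zero, C_0, zero_mul, zero_mul, zero_mul, mul_zero, mul_zero]
    simp only [pochhammerRatio, truncExp, range_zero, prod_empty, mul_zero, add_zero, ne_eq,
      OfNat.ofNat_ne_zero, not_false_eq_true, zero_pow]
    exact SModEq.refl _
  | succ a ih =>
    have hvalue := h (C (a : ℤ_[p]))
    rw [← C_mul, ← Nat.cast_mul, comp_C] at hvalue
    have hcancel := congrArg C (Ring.inverse_mul_cancel _ (isUnit_eval_recipProd (p := p) a))
    rw [C_mul, C_1] at hcancel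
    have hinv := smodEq_truncExp_neg_of_mul_eq_one hη' hcancel hvalue
    rw [pochhammerRatio_succ]
    refine (ih.mul ((hinv.mul (h _)).trans (truncExp_mul_smodEq _ hη' _ _ _ _))).trans
      ((truncExp_mul_smodEq _ hη' _ _ _ _).trans ?_)
    rw [truncPochhammerRatio, Nat.cast_succ, C_add, C_1]
    ring_nf
    exact SModEq.refl _

end RecipProdExpansion

section Vandermonde

open Polynomial

variable {R : Type*} [CommRing R]

lemma sum_choose_mul_ascPochhammer_eval (x y : R) (m : ℕ) :
    ∑ ab ∈ antidiagonal m, (m.choose ab.1 : R) *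
      ((ascPochhammer R ab.1).eval x * (ascPochhammer R ab.2).eval y) =
        (ascPochhammer R m).eval (x + y) := by
  induction m with
  | zero => simp
  | succ m ih =>
    rw [sum_antidiagonal_choose_succ_mul
      (fun a b => (ascPochhammer R a).eval x * (ascPochhammer R b).eval y), ← sum_add_distrib,
      ascPochhammer_succ_eval, ← ih, sum_mul]
    refine sum_congr rfl fun ab hab => ?_
    rw [HasAntidiagonal.mem_antidiagonal] at hab
    rw [← Nat.choose_symm_of_eq_add hab.symm, ascPochhammer_succ_eval, ascPochhammer_succ_eval,
      ← hab, Nat.cast_add]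
    ring

lemma sum_choose_mul_descFactorial_mul_ascPochhammer_eval (x y : R) (m k : ℕ) :
    ∑ ab ∈ antidiagonal m, (m.choose ab.1 : R) *
      ((ascPochhammer R ab.1).eval x * (ascPochhammer R ab.2).eval y) * ab.1.descFactorial k =
        m.descFactorial k * ((ascPochhammer R k).eval x *
          (ascPochhammer R (m - k)).eval (x + k + y)) := by
  induction k generalizing x m with
  | zero => simpa using sum_choose_mul_ascPochhammer_eval x y m
  | succ k ih =>
    have hshift (x : R) (n : ℕ) :
        (ascPochhammer R (n + 1)).eval x = x * (ascPochhammer R n).eval (x + 1) := by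
      simp [ascPochhammer_succ_left]
    cases m with
    | zero => simp
    | succ m =>
      rw [Nat.sum_antidiagonal_succ, Nat.zero_descFactorial_succ, Nat.cast_zero, mul_zero,
        zero_add, Nat.succ_descFactorial_succ, Nat.add_sub_add_right, hshift]
      have := congrArg ((m + 1) * x * ·) (ih (x + 1) m)
      simp only [mul_sum] at this
      rw [Nat.cast_succ k, ← add_assoc, add_right_comm x, Nat.cast_mul, Nat.cast_succ]
      refine Eq.trans (sum_congr rfl fun ab _ => ?_) (this.trans (by ring))
      have hchoose : ((m + 1).choose (ab.1 + 1) : R) * (ab.1 + 1) = (m + 1) * m.choose ab.1 := by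
        exact_mod_cast congrArg (Nat.cast (R := R)) (Nat.add_one_mul_choose_eq m ab.1).symm
      rw [hshift, Nat.succ_descFactorial_succ, Nat.cast_mul, Nat.cast_succ]
      linear_combination (x * (ascPochhammer R ab.1).eval (x + 1) *
        (ascPochhammer R ab.2).eval y * (ab.1.descFactorial k : R)) * hchoose

lemma vandermondeSum_descFactorial (m k : ℕ) :
    vandermondeSum R m (fun a => (a.descFactorial k : R[X])) =
      m.descFactorial k * (ascPochhammer R k * (ascPochhammer R[X] (m - k)).eval (k : R[X])) := by
  have hcomp (n : ℕ) (P : R[X]) : (ascPochhammer R n).comp P = (ascPochhammer R[X] n).eval P :=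
    (ascPochhammer_eval₂ C n P).symm
  have h := sum_choose_mul_descFactorial_mul_ascPochhammer_eval (X : R[X]) (-X) m k
  rw [vandermondeSum_apply]
  simpa only [← hcomp, comp_X, add_neg_cancel_comm] using h

lemma vandermondeSum_one (m : ℕ) :
    vandermondeSum R m (fun _ => 1) = if m = 0 then 1 else 0 := by
  simpa [ascPochhammer_eval_zero] using vandermondeSum_descFactorial (R := R) m 0

lemma vandermondeSum_succ_descFactorial_succ (m k : ℕ) :
    vandermondeSum R (m + 1) (fun a => (a.descFactorial (k + 1) : R[X])) =
      ((m + 1).factorial * m.choose k : ℕ) * ascPochhammer R (k + 1) := by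
  have hnat : (m + 1).descFactorial (k + 1) * (k + 1).ascFactorial (m - k) =
      (m + 1).factorial * m.choose k := by
    obtain hkm | hkm := lt_or_ge m k
    · rw [Nat.descFactorial_of_lt (Nat.succ_lt_succ hkm), Nat.choose_eq_zero_of_lt hkm, zero_mul,
        mul_zero]
    · have hfact := Nat.factorial_mul_ascFactorial k (m - k)
      rw [Nat.add_sub_cancel' hkm] at hfact
      rw [Nat.succ_descFactorial_succ, Nat.descFactorial_eq_factorial_mul_choose,
        Nat.factorial_succ, ← hfact]
      ring
  rw [vandermondeSum_descFactorial, Nat.add_sub_add_right,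
    ascPochhammer_nat_eq_natCast_ascFactorial, ← hnat]
  push_cast
  ring

lemma vandermondeSum_pow_succ_mul_descFactorial (m j k : ℕ) :
    vandermondeSum R m (fun a => (a : R[X]) ^ (j + 1) * a.descFactorial k) =
      vandermondeSum R m (fun a => (a : R[X]) ^ j * a.descFactorial (k + 1)) +
        k * vandermondeSum R m fun a => (a : R[X]) ^ j * a.descFactorial k := by
  rw [← smul_eq_mul, ← map_smul, ← map_add]
  congr 1
  funext a
  have hstep : (a.descFactorial (k + 1) : R[X]) = (a - k) * a.descFactorial k := by
    rw [Nat.descFactorial_succ]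
    obtain hak | hka := lt_or_ge a k
    · simp [Nat.descFactorial_of_lt hak]
    · push_cast [hka]
      rfl
  rw [Pi.add_apply, Pi.smul_apply, smul_eq_mul, hstep]
  ring

lemma natDegree_ascPochhammer_le (n : ℕ) : (ascPochhammer R n).natDegree ≤ n := by
  rw [← ascPochhammer_map (Int.castRingHom R)]
  exact natDegree_map_le.trans (ascPochhammer_natDegree ℤ n).le

lemma coeff_ascPochhammer_self (n : ℕ) : (ascPochhammer R n).coeff n = 1 := by
  rw [← ascPochhammer_map (Int.castRingHom R), coeff_map]
  nth_rw 2 [← ascPochhammer_natDegree ℤ n]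
  rw [coeff_natDegree, (monic_ascPochhammer ℤ n).leadingCoeff, map_one]

lemma natDegree_vandermondeSum_succ_pow_mul_descFactorial_succ_le (m j k : ℕ) :
    (vandermondeSum R (m + 1) fun a => (a : R[X]) ^ j * a.descFactorial (k + 1)).natDegree ≤
      j + k + 1 := by
  induction j generalizing k with
  | zero =>
    simp only [pow_zero, one_mul, zero_add, vandermondeSum_succ_descFactorial_succ]
    exact (natDegree_C_mul_le _ _).trans (natDegree_ascPochhammer_le _)
  | succ j ih =>
    rw [vandermondeSum_pow_succ_mul_descFactorial]
    exact natDegree_add_le_of_degree_le ((ih (k + 1)).trans (by omega))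
      ((natDegree_C_mul_le _ _).trans ((ih k).trans (by omega)))

lemma coeff_vandermondeSum_succ_pow_mul_descFactorial_succ (m j k : ℕ) :
    (vandermondeSum R (m + 1) fun a => (a : R[X]) ^ j * a.descFactorial (k + 1)).coeff
      (j + k + 1) = ((m + 1).factorial * m.choose (j + k) : ℕ) := by
  induction j generalizing k with
  | zero =>
    simp only [pow_zero, one_mul, zero_add, vandermondeSum_succ_descFactorial_succ]
    rw [coeff_natCast_mul, coeff_ascPochhammer_self, mul_one]
  | succ j ih =>
    rw [vandermondeSum_pow_succ_mul_descFactorial, coeff_add, coeff_natCast_mul,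
      coeff_eq_zero_of_natDegree_lt (Nat.lt_of_le_of_lt
        (natDegree_vandermondeSum_succ_pow_mul_descFactorial_succ_le m j k) (by omega)), mul_zero,
      add_zero, add_right_comm j, add_assoc j, ih]

lemma natDegree_vandermondeSum_succ_pow_le (m k : ℕ) :
    (vandermondeSum R (m + 1) fun a => (a : R[X]) ^ k).natDegree ≤ k := by
  cases k with
  | zero => simp [vandermondeSum_one]
  | succ k =>
    simpa [pow_succ] using
      natDegree_vandermondeSum_succ_pow_mul_descFactorial_succ_le (R := R) m k 0

lemma coeff_vandermondeSum_succ_pow_succ (m k : ℕ) :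
    (vandermondeSum R (m + 1) fun a => (a : R[X]) ^ (k + 1)).coeff (k + 1) =
      ((m + 1).factorial * m.choose k : ℕ) := by
  simpa [pow_succ] using coeff_vandermondeSum_succ_pow_mul_descFactorial_succ (R := R) m k 0

end Vandermonde

section CoefficientCongruence

open Polynomial

section

variable {R : Type*} [CommRing R] (π η α β : R) (m : ℕ)

lemma vandermondeSum_succ_truncPochhammerRatio {V : ℕ → R[X]}
    (hV : ∀ k, V k = vandermondeSum R (m + 1) fun a => (a : R[X]) ^ k) :
    vandermondeSum R (m + 1) (truncPochhammerRatio π η α β) =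
      C (π ^ 3 * α) * (X ^ 1 * V 2 + X ^ 2 * V 1) +
      C (π ^ 5 * β) * (X ^ 1 * (V 4 - V 2) + X ^ 2 * (C 2 * V 3 - V 1) +
        X ^ 3 * (C 2 * V 2) + X ^ 4 * V 1) +
      C (π ^ 6 * η * α ^ 2) * (X ^ 2 * V 4 + X ^ 3 * (C 2 * V 3) + X ^ 4 * V 2) := by
  have hone := vandermondeSum_one (R := R) (m + 1)
  rw [if_neg m.succ_ne_zero] at hone
  rw [← sub_eq_zero, ← hone, sub_eq_iff_eq_add]
  simp only [hV, ← smul_eq_mul, ← map_smul, ← map_add, ← map_sub]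
  congr 1
  funext a
  simp only [truncPochhammerRatio, truncExp, Pi.add_apply, Pi.sub_apply, Pi.smul_apply,
    smul_eq_mul, C_mul, C_pow, C_eq_natCast, C_ofNat]
  ring

lemma pow_dvd_coeff_three_vandermondeSum_succ_truncPochhammerRatio_sub :
    π ^ 5 ∣ (vandermondeSum R (m + 1) (truncPochhammerRatio π η α β)).coeff 3 -
      π ^ 3 * α * ((m + 1).factorial * (m + 1) : ℕ) := by
  have h₁ := coeff_vandermondeSum_succ_pow_succ (R := R) m 0
  have h₂ := coeff_vandermondeSum_succ_pow_succ (R := R) m 1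
  simp only [zero_add, one_add_one_eq_two, Nat.choose_zero_right, Nat.choose_one_right] at h₁ h₂
  obtain ⟨B, Q, hBQ⟩ : ∃ B Q : R[X], vandermondeSum R (m + 1) (truncPochhammerRatio π η α β) =
      C (π ^ 3 * α) * (X ^ 1 * _ + X ^ 2 * _) + C (π ^ 5 * β) * B + C (π ^ 6 * η * α ^ 2) * Q :=
    ⟨_, _, vandermondeSum_succ_truncPochhammerRatio π η α β m fun _ => rfl⟩
  refine ⟨β * B.coeff 3 + π * η * α ^ 2 * Q.coeff 3, ?_⟩
  rw [hBQ, coeff_add, coeff_add, coeff_C_mul, coeff_C_mul, coeff_C_mul, coeff_add,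
    coeff_X_pow_mul _ 1 2, coeff_X_pow_mul _ 2 1]
  push_cast at h₁ h₂ ⊢
  linear_combination π ^ 3 * α * (h₁ + h₂)

lemma coeff_six_vandermondeSum_succ_truncPochhammerRatio :
    (vandermondeSum R (m + 1) (truncPochhammerRatio π η α β)).coeff 6 =
      π ^ 6 * η * α ^ 2 * ((m + 1).factorial * (m + 2).choose 3 : ℕ) := by
  obtain ⟨V, hV⟩ : ∃ V : ℕ → R[X], ∀ k, V k = vandermondeSum R (m + 1) fun a => (a : R[X]) ^ k :=
    ⟨_, fun _ => rfl⟩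
  have hzero {k n : ℕ} (hkn : k < n) : (V k).coeff n = 0 :=
    coeff_eq_zero_of_natDegree_lt
      (hV k ▸ (natDegree_vandermondeSum_succ_pow_le m k).trans_lt hkn)
  have htop (k : ℕ) : (V (k + 1)).coeff (k + 1) = (m + 1).factorial * m.choose k := by
    rw [hV, coeff_vandermondeSum_succ_pow_succ, Nat.cast_mul]
  have hchoose : (m + 2).choose 3 = m.choose 1 + 2 * m.choose 2 + m.choose 3 := by
    simp only [Nat.choose_succ_succ']
    ring
  rw [vandermondeSum_succ_truncPochhammerRatio π η α β m hV, hchoose]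
  simp only [coeff_add, coeff_sub, coeff_C_mul, coeff_X_pow_mul', Nat.reduceLeDiff, if_true,
    Nat.reduceSub, Nat.reduceLT, hzero]
  push_cast
  linear_combination π ^ 6 * η * α ^ 2 * (htop 3 + 2 * htop 2 + htop 1)

end

lemma dvd_coeff_vandermondeSum_sub {R : Type*} [CommRing R] {c : R} {g g' : ℕ → R[X]}
    (h : ∀ a, g a ≡ g' a [SMOD Ideal.span {C c}]) (m n : ℕ) :
    c ∣ (vandermondeSum R m g).coeff n - (vandermondeSum R m g').coeff n := by
  have h' (a : ℕ) : ∃ d, g a - g' a = C c * d :=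
    Ideal.mem_span_singleton.1 (SModEq.sub_mem.1 (h a))
  choose d hd using h'
  have hsmul : g - g' = C c • d := funext hd
  rw [← coeff_sub, ← map_sub, hsmul, map_smul, smul_eq_mul, coeff_C_mul]
  exact dvd_mul_right _ _

variable {p : ℕ} [Fact p.Prime]

lemma isUnit_cast_factorial {m : ℕ} (hm : m < p) : IsUnit (m.factorial : ℤ_[p]) :=
  isUnit_natCast_iff.2 fun h => hm.not_ge ((Nat.Prime.dvd_factorial Fact.out).1 h)

lemma exists_pochhammerRatio_smodEq_truncPochhammerRatio (hp : 7 < p) :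
    ∃ η α β : ℤ_[p], 2 * η = 1 ∧ ∀ a, pochhammerRatio p a ≡ truncPochhammerRatio (p : ℤ_[p]) η α β a
      [SMOD Ideal.span {C ((p : ℤ_[p]) ^ 7)}] := by
  obtain ⟨α, β, h⟩ := exists_recipProd_comp_smodEq hp
  have h2 : ¬p ∣ 2 := Nat.not_dvd_of_pos_of_lt two_pos (by omega)
  have hη : (2 : ℤ_[p]) * ((2 : ℕ) : ℤ_[p])⁻¹ʳ = 1 := natCast_mul_inverse h2
  refine ⟨((2 : ℕ) : ℤ_[p])⁻¹ʳ, α, β - p * ((2 : ℕ) : ℤ_[p])⁻¹ʳ * α ^ 2, hη, fun a => ?_⟩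
  rw [C_pow]
  refine pochhammerRatio_smodEq_truncPochhammerRatio hη (fun t => (h t).trans ?_) a
  simp only [truncExp, C_sub, C_mul, C_pow]
  ring_nf
  exact SModEq.refl _

/-- The coefficient of `X³` only sees the linear term of the truncated exponential, that of `X⁶`
only the square of that term. -/
lemma exists_dvd_coeff_recipSeries_pow_sub (hp : 7 < p) : ∃ α : ℤ_[p], ∀ m, m + 1 < p →
    (p : ℤ_[p]) ∣ PowerSeries.coeff (p * (m + 1)) (recipSeries ℤ_[p] ^ 3) - 6 * α * (m + 1) ∧
    (p : ℤ_[p]) ∣ PowerSeries.coeff (p * (m + 1)) (recipSeries ℤ_[p] ^ 6) -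
      360 * α ^ 2 * (m + 2).choose 3 := by
  obtain ⟨η, α, β, hη, h⟩ := exists_pochhammerRatio_smodEq_truncPochhammerRatio hp
  have hp₀ : (p : ℤ_[p]) ≠ 0 := Nat.cast_ne_zero.2 (Nat.Prime.ne_zero Fact.out)
  refine ⟨α, fun m hm => ⟨?_, ?_⟩⟩
  · obtain ⟨x, hx⟩ := dvd_coeff_vandermondeSum_sub h (m + 1) 3
    obtain ⟨y, hy⟩ :=
      pow_dvd_coeff_three_vandermondeSum_succ_truncPochhammerRatio_sub (p : ℤ_[p]) η α β m
    have hcoeff := factorial_mul_pow_mul_coeff_recipSeries_pow (p := p) (m + 1) 3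
    refine (isUnit_cast_factorial hm).dvd_mul_left.1 ⟨6 * (p * y + p ^ 3 * x), ?_⟩
    refine mul_left_cancel₀ (pow_ne_zero 3 hp₀) ?_
    rw [show Nat.factorial 3 = 6 from rfl] at hcoeff
    push_cast at hcoeff hy
    linear_combination hcoeff + 6 * hx + 6 * hy
  · obtain ⟨x, hx⟩ := dvd_coeff_vandermondeSum_sub h (m + 1) 6
    have hy := coeff_six_vandermondeSum_succ_truncPochhammerRatio (p : ℤ_[p]) η α β m
    have hcoeff := factorial_mul_pow_mul_coeff_recipSeries_pow (p := p) (m + 1) 6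
    refine (isUnit_cast_factorial hm).dvd_mul_left.1 ⟨720 * x, ?_⟩
    refine mul_left_cancel₀ (pow_ne_zero 6 hp₀) ?_
    rw [show Nat.factorial 6 = 720 from rfl] at hcoeff
    push_cast at hcoeff hy
    linear_combination hcoeff + 720 * hx + 720 * hy +
      360 * p ^ 6 * α ^ 2 * ((m + 1).factorial * (m + 2).choose 3) * hη

end CoefficientCongruence

section CoefficientAtPrimePower

lemma dvd_fwdDiff_iter_sub_fwdDiff_iter {R : Type*} [CommRing R] {c : R} {g g' : ℕ → R} {q i : ℕ}
    (h : ∀ m ≤ i, c ∣ g (m * q) - g' m) : c ∣ Δ_[q] ^[i] g 0 - Δ_[1] ^[i] g' 0 := by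
  simp only [fwdDiff_iter_eq_sum_shift, zero_add, smul_eq_mul, mul_one, ← sum_sub_distrib,
    ← smul_sub]
  exact dvd_sum fun m hm => dvd_smul_of_dvd _ (h m (mem_range_succ_iff.1 hm))

lemma fwdDiff_iter_cast_choose_zero (R : Type*) [CommRing R] (j i : ℕ) :
    Δ_[1] ^[i] (fun m : ℕ => (m.choose j : R)) 0 = if i = j then 1 else 0 := by
  have h := congrArg (Int.cast (R := R)) (fwdDiff_iter_choose_zero j i)
  rw [fwdDiff_iter_eq_sum_shift] at h ⊢
  simpa using h

lemma fwdDiff_iter_cast_succ_choose_succ_zero (R : Type*) [CommRing R] (j i : ℕ) :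
    Δ_[1] ^[i] (fun m : ℕ => ((m + 1).choose (j + 1) : R)) 0 =
      (if i = j then 1 else 0) + if i = j + 1 then 1 else 0 := by
  have hpascal : (fun m : ℕ => ((m + 1).choose (j + 1) : R)) =
      (fun m : ℕ => (m.choose j : R)) + fun m : ℕ => (m.choose (j + 1) : R) := by
    funext m
    simp [Nat.choose_succ_succ']
  rw [hpascal, fwdDiff_iter_add, Pi.add_apply, fwdDiff_iter_cast_choose_zero,
    fwdDiff_iter_cast_choose_zero]

variable {p : ℕ} [Fact p.Prime]

/-- The differences of order two and three enter with the weights `-1 / 2` and `1 / 3`. -/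
lemma sum_range_fwdDiff_iter_succ_choose_three (hp : 3 < p) (c : ℤ_[p]) :
    ∑ i ∈ range 5, (-1) ^ i * ((i + 1 : ℕ) : ℤ_[p])⁻¹ʳ *
      Δ_[1] ^[i + 1] ((6 * c) • fun m : ℕ => ((m + 1).choose 3 : ℤ_[p])) 0 = -c := by
  have hv2 : ((1 + 1 : ℕ) : ℤ_[p]) * ((1 + 1 : ℕ) : ℤ_[p])⁻¹ʳ = 1 :=
    natCast_mul_inverse (Nat.not_dvd_of_pos_of_lt two_pos (by omega))
  have hv3 : ((2 + 1 : ℕ) : ℤ_[p]) * ((2 + 1 : ℕ) : ℤ_[p])⁻¹ʳ = 1 :=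
    natCast_mul_inverse (Nat.not_dvd_of_pos_of_lt three_pos hp)
  simp only [fwdDiff_iter_const_smul, Pi.smul_apply, fwdDiff_iter_cast_succ_choose_succ_zero,
    sum_range_succ, sum_range_zero, Nat.reduceEqDiff, smul_eq_mul, if_true, if_false]
  push_cast at hv2 hv3 ⊢
  linear_combination -3 * c * hv2 + 2 * c * hv3

lemma pow_dvd_coeff_recipSeries_pow_six_add (hp : 7 < p) {k : ℕ} (hk : k ≠ 0) {α : ℤ_[p]}
    (hα : ∀ m, m + 1 < p → (p : ℤ_[p]) ∣ PowerSeries.coeff (p * (m + 1)) (recipSeries ℤ_[p] ^ 6) -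
      360 * α ^ 2 * (m + 2).choose 3) :
    (p : ℤ_[p]) ^ (k + 1) ∣
      PowerSeries.coeff (p ^ (k + 1)) (recipSeries ℤ_[p] ^ 6) + 60 * p ^ k * α ^ 2 := by
  set g : ℕ → ℤ_[p] := fun n => PowerSeries.coeff n (recipSeries ℤ_[p] ^ 6) with hg
  set g' : ℕ → ℤ_[p] := (6 * (60 * α ^ 2)) • fun m => ((m + 1).choose 3 : ℤ_[p]) with hg'
  have hg₀ : g 0 = 0 := by simp [hg]
  have hdiff (i : ℕ) (hi : i < p) : (p : ℤ_[p]) ∣ Δ_[p] ^[i] g 0 - Δ_[1] ^[i] g' 0 := by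
    refine dvd_fwdDiff_iter_sub_fwdDiff_iter fun m hm => ?_
    cases m with
    | zero => simp [hg₀, hg', Nat.choose]
    | succ m =>
      convert hα m (by omega) using 2
      · rw [hg, mul_comm]
      · rw [hg', Pi.smul_apply, smul_eq_mul]
        ring
  have hnewton := pow_dvd_sub_newton (d := 5) (by omega) hk (g := g)
    fun i => pow_dvd_fwdDiff_iter_coeff_recipSeries_pow dvd_rfl 5 i 0
  have hsum : (p : ℤ_[p]) ∣ (∑ i ∈ range 5, (-1) ^ i * ((i + 1 : ℕ) : ℤ_[p])⁻¹ʳ *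
      Δ_[p] ^[i + 1] g 0) - -(60 * α ^ 2) := by
    rw [← sum_range_fwdDiff_iter_succ_choose_three (by omega) (60 * α ^ 2), ← sum_sub_distrib]
    simp only [← mul_sub]
    exact dvd_sum fun i hi => (hdiff _ (by have := mem_range.1 hi; omega)).mul_left _
  obtain ⟨x, hx⟩ := hnewton
  obtain ⟨y, hy⟩ := hsum
  refine ⟨x + y, ?_⟩
  linear_combination hx + hg₀ + p ^ k * hy

end CoefficientAtPrimePower

section Bernoulli

variable {p : ℕ} [Fact p.Prime]

lemma norm_bernoulli_le_one {i : ℕ} (hi : i + 1 < p) : ‖((bernoulli i : ℚ) : ℚ_[p])‖ ≤ 1 := by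
  induction i using Nat.strong_induction_on with
  | _ i ih =>
    have hrec : ((i + 1 : ℕ) : ℚ_[p]) * (bernoulli i : ℚ) = (if i = 0 then 1 else 0) -
        ∑ k ∈ range i, ((i + 1).choose k : ℚ_[p]) * (bernoulli k : ℚ) := by
      have h := congrArg (Rat.cast (K := ℚ_[p])) (sum_bernoulli (i + 1))
      rw [sum_range_succ, Nat.choose_succ_self_right] at h
      rw [eq_sub_iff_add_eq']
      simpa [apply_ite (Rat.cast (K := ℚ_[p]))] using h
    have hintegral : ((i + 1 : ℕ) : ℚ_[p]) * (bernoulli i : ℚ) ∈ PadicInt.subring p := by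
      rw [hrec]
      refine sub_mem (by split_ifs <;> simp) (sum_mem fun k hk => mul_mem (natCast_mem _ _) ?_)
      have hk := mem_range.1 hk
      exact ih k hk (by omega)
    have hunit : ‖((i + 1 : ℕ) : ℚ_[p])‖ = 1 :=
      PadicInt.isUnit_iff.1 (isUnit_natCast_iff.2 (Nat.not_dvd_of_pos_of_lt i.succ_pos hi))
    rwa [PadicInt.mem_subring_iff, norm_mul, hunit, one_mul] at hintegral

/-- Faulhaber's formula for the exponent `p - 2`. -/
lemma sum_range_inv_eq_bernoulli (hp : 2 < p) {b : ℕ → ℤ_[p]}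
    (hb : ∀ i, i + 1 < p → (b i : ℚ_[p]) = (bernoulli i : ℚ)) (n : ℕ) :
    ∑ l ∈ range n, (l : ZMod p)⁻¹ =
      -∑ i ∈ range (p - 1), (-1) ^ i * PadicInt.toZMod (b i) * (n : ZMod p) ^ (p - 1 - i) := by
  have hfaulhaber : (p - 1 : ℤ_[p]) * ∑ l ∈ range n, (l : ℤ_[p]) ^ (p - 2) =
      ∑ i ∈ range (p - 1), b i * (p - 1).choose i * (n : ℤ_[p]) ^ (p - 1 - i) := by
    have hq := sum_range_pow n (p - 2)
    rw [← sum_div, ← Nat.cast_add_one, show p - 2 + 1 = p - 1 by omega,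
      eq_div_iff (Nat.cast_ne_zero.2 (by omega)), mul_comm, Nat.cast_pred (by omega)] at hq
    have hq' := congrArg (Rat.cast (K := ℚ_[p])) hq
    push_cast at hq'
    refine PadicInt.ext ?_
    push_cast [PadicInt.coe_sum]
    rw [hq']
    refine sum_congr rfl fun i hi => ?_
    rw [hb i (by have := mem_range.1 hi; omega)]
  have hinv (x : ZMod p) : x⁻¹ = x ^ (p - 2) := by
    rcases eq_or_ne x 0 with rfl | hx
    · rw [inv_zero, zero_pow (by omega)]
    · refine inv_eq_of_mul_eq_one_right ?_
      rw [← pow_succ', show p - 2 + 1 = p - 1 by omega, ZMod.pow_card_sub_one_eq_one hx]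
  have hchoose (i : ℕ) (hi : i < p) : ((p - 1).choose i : ZMod p) = (-1) ^ i := by
    simpa using cast_choose_pow_sub_one (ZMod p) (p := p) Fact.out (k := 1) (by simpa using hi)
  have hmod := congrArg PadicInt.toZMod hfaulhaber
  simp only [map_mul, map_sum, map_sub, map_pow, map_natCast, map_one, CharP.cast_eq_zero,
    zero_sub, neg_one_mul, ← hinv] at hmod
  rw [← neg_eq_iff_eq_neg, hmod]
  refine sum_congr rfl fun i hi => ?_
  rw [hchoose i (by have := mem_range.1 hi; omega), mul_comm ((-1) ^ i)]

lemma sum_range_eq_sum_units {M : Type*} [AddCommMonoid M] {g : ZMod p → M} (hg : g 0 = 0) :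
    ∑ k ∈ range p, g k = ∑ u : (ZMod p)ˣ, g u := by
  rw [Fintype.sum_of_injective (Units.val : (ZMod p)ˣ → ZMod p) Units.val_injective (fun u => g u) g
    (fun x hx => ?_) fun _ => rfl]
  · exact sum_nbij' (fun k => (k : ZMod p)) ZMod.val (by simp) (by simp [ZMod.val_lt])
      (fun k hk => ZMod.val_cast_of_lt (mem_range.1 hk)) (by simp) (by simp)
  · have hx₀ : x = 0 := by_contra fun h => hx ⟨Units.mk0 x h, rfl⟩
    rw [hx₀, hg]

lemma sum_range_inv_sq_mul_pow (hp : 2 < p) {i : ℕ} (hi : i + 1 < p) :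
    ∑ k ∈ range p, (k : ZMod p)⁻¹ ^ 2 * (k : ZMod p) ^ (p - 1 - i) =
      if i = p - 3 then -1 else 0 := by
  have hterm (u : (ZMod p)ˣ) : (u : ZMod p)⁻¹ ^ 2 * (u : ZMod p) ^ (p - 1 - i) =
      u ^ (p - 3 + (p - 1 - i)) := by
    have := ZMod.pow_card_sub_one_eq_one u.ne_zero
    rw [show p - 1 = 2 + (p - 3) by omega, pow_add] at this
    rw [pow_add, inv_pow, inv_eq_of_mul_eq_one_right this]
  have hdvd : p - 1 ∣ p - 3 + (p - 1 - i) ↔ i = p - 3 := by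
    constructor
    · rintro ⟨m, hm⟩
      have hm₂ : m < 2 := by
        by_contra! h
        have := Nat.mul_le_mul_left (p - 1) h
        omega
      interval_cases m <;> omega
    · rintro rfl
      exact ⟨1, by omega⟩
  rw [sum_range_eq_sum_units (g := fun x => x⁻¹ ^ 2 * x ^ (p - 1 - i)) (by simp)]
  simp only [hterm, FiniteField.sum_pow_units, ZMod.card, hdvd]

lemma natCast_mul_coeff_recipSeries_sq {n : ℕ} (hn : n < p) :
    (n : ZMod p) * PowerSeries.coeff n (recipSeries (ZMod p) ^ 2) =
      2 * ∑ l ∈ range n, (l : ZMod p)⁻¹ := by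
  cases n with
  | zero => simp
  | succ n =>
    have hderiv (m : ℕ) (hm : m + 1 < p) :
        PowerSeries.coeff m (PowerSeries.derivative _ (recipSeries (ZMod p))) = 1 := by
      have hm₀ : ((m + 1 : ℕ) : ZMod p) ≠ 0 := (ZMod.natCast_eq_zero_iff _ p).not.2
        (Nat.not_dvd_of_pos_of_lt m.succ_pos hm)
      rw [PowerSeries.coeff_derivative, coeff_recipSeries, Ring.inverse_eq_inv]
      exact_mod_cast inv_mul_cancel₀ hm₀
    have := PowerSeries.coeff_derivative (recipSeries (ZMod p) ^ 2) n
    rw [Nat.cast_add_one, mul_comm, ← this, PowerSeries.derivative_pow, mul_assoc,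
      ← map_natCast PowerSeries.C, PowerSeries.coeff_C_mul, PowerSeries.coeff_mul,
      Nat.sum_antidiagonal_eq_sum_range_succ_mk, Nat.cast_two]
    congr 1
    refine sum_congr rfl fun l _ => ?_
    rw [hderiv _ (by omega)]
    simp

lemma coeff_recipSeries_cube_eq_sum :
    PowerSeries.coeff p (recipSeries (ZMod p) ^ 3) =
      -2 * ∑ k ∈ range p, (k : ZMod p)⁻¹ ^ 2 * ∑ l ∈ range k, (l : ZMod p)⁻¹ := by
  rw [pow_succ, PowerSeries.coeff_mul, Nat.sum_antidiagonal_eq_sum_range_succ_mk, sum_range_succ,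
    mul_sum]
  simp only [Nat.sub_self, coeff_recipSeries, Nat.cast_zero, Ring.inverse_zero, mul_zero, add_zero]
  refine sum_congr rfl fun k hk => ?_
  rcases eq_or_ne k 0 with rfl | hk₀
  · simp
  have hk := mem_range.1 hk
  have hcancel : (k : ZMod p)⁻¹ * k = 1 := inv_mul_cancel₀ <|
    (ZMod.natCast_eq_zero_iff _ p).not.2 (Nat.not_dvd_of_pos_of_lt (by omega) hk)
  rw [Ring.inverse_eq_inv, Nat.cast_sub hk.le, CharP.cast_eq_zero, zero_sub, inv_neg]
  linear_combination -(k : ZMod p)⁻¹ ^ 2 * natCast_mul_coeff_recipSeries_sq hk +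
    (k : ZMod p)⁻¹ * PowerSeries.coeff k (recipSeries (ZMod p) ^ 2) * hcancel

lemma sum_range_inv_sq_mul_sum_range_inv (hp : 2 < p) {b : ℤ_[p]}
    (hb : (b : ℚ_[p]) = (bernoulli (p - 3) : ℚ)) :
    ∑ k ∈ range p, (k : ZMod p)⁻¹ ^ 2 * ∑ l ∈ range k, (l : ZMod p)⁻¹ = PadicInt.toZMod b := by
  have hintegral (i : ℕ) (hi : i + 1 < p) : ∃ b : ℤ_[p], (b : ℚ_[p]) = (bernoulli i : ℚ) :=
    ⟨⟨_, norm_bernoulli_le_one hi⟩, rfl⟩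
  choose! c hc using hintegral
  obtain rfl : b = c (p - 3) := PadicInt.ext (hb.trans (hc _ (by omega)).symm)
  have heven : Even (p - 3) := by
    obtain ⟨m, hm⟩ := Nat.Prime.odd_of_ne_two (p := p) Fact.out hp.ne'
    exact ⟨m - 1, by omega⟩
  calc ∑ k ∈ range p, (k : ZMod p)⁻¹ ^ 2 * ∑ l ∈ range k, (l : ZMod p)⁻¹
    _ = -∑ i ∈ range (p - 1), (-1) ^ i * PadicInt.toZMod (c i) *
          ∑ k ∈ range p, (k : ZMod p)⁻¹ ^ 2 * (k : ZMod p) ^ (p - 1 - i) := by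
      simp only [sum_range_inv_eq_bernoulli hp hc, mul_neg, mul_sum, sum_neg_distrib]
      rw [sum_comm]
      simp only [mul_left_comm]
    _ = -∑ i ∈ range (p - 1), (-1) ^ i * PadicInt.toZMod (c i) * if i = p - 3 then -1 else 0 := by
      congr 1
      refine sum_congr rfl fun i hi => ?_
      rw [sum_range_inv_sq_mul_pow hp (by have := mem_range.1 hi; omega)]
    _ = PadicInt.toZMod (c (p - 3)) := by
      simp [heven.neg_one_pow, show p - 3 < p - 1 by omega]

lemma dvd_coeff_recipSeries_cube_add (hp : 2 < p) {b : ℤ_[p]}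
    (hb : (b : ℚ_[p]) = (bernoulli (p - 3) : ℚ)) :
    (p : ℤ_[p]) ∣ PowerSeries.coeff p (recipSeries ℤ_[p] ^ 3) + 2 * b := by
  rw [← toZMod_eq_zero_iff_dvd, map_add, ← PowerSeries.coeff_map, map_pow, map_toZMod_recipSeries,
    coeff_recipSeries_cube_eq_sum, sum_range_inv_sq_mul_sum_range_inv hp hb, map_mul, map_ofNat]
  ring

end Bernoulli

section BernoulliCongruence

variable {p : ℕ} [Fact p.Prime]

lemma pow_dvd_coeff_recipSeries_pow_six_add_bernoulli (hp : 7 < p) {k : ℕ} (hk : k ≠ 0)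
    {b : ℤ_[p]} (hb : (b : ℚ_[p]) = (bernoulli (p - 3) : ℚ)) :
    (p : ℤ_[p]) ^ (k + 1) ∣ PowerSeries.coeff (p ^ (k + 1)) (recipSeries ℤ_[p] ^ 6) +
      20 * (3 : ℤ_[p])⁻¹ʳ * p ^ k * b ^ 2 := by
  have h2 : ¬p ∣ 2 := Nat.not_dvd_of_pos_of_lt two_pos (by omega)
  have h3 : ¬p ∣ 3 := Nat.not_dvd_of_pos_of_lt three_pos (by omega)
  obtain ⟨α, hα⟩ := exists_dvd_coeff_recipSeries_pow_sub hp
  have hαb : (p : ℤ_[p]) ∣ 3 * α + b := by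
    have hcube := (hα 0 (by omega)).1
    rw [zero_add, mul_one] at hcube
    refine (isUnit_natCast_iff.2 h2).dvd_mul_left.1 ?_
    convert dvd_sub (dvd_coeff_recipSeries_cube_add (by omega) hb) hcube using 1
    push_cast
    ring
  obtain ⟨x, hx⟩ := pow_dvd_coeff_recipSeries_pow_six_add hp hk fun m hm => (hα m hm).2
  obtain ⟨y, hy⟩ := hαb
  have hv3 : 3 * (3 : ℤ_[p])⁻¹ʳ = 1 := natCast_mul_inverse h3
  refine ⟨x + 20 * (3 : ℤ_[p])⁻¹ʳ * (b - 3 * α) * y, ?_⟩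
  linear_combination hx + 20 * (3 : ℤ_[p])⁻¹ʳ * p ^ k * (b - 3 * α) * hy +
    60 * p ^ k * α ^ 2 * hv3

end BernoulliCongruence

end CoprimeHarmonicSum

open CoprimeHarmonicSum

theorem stmt_13 (p r : ℕ) (hp : p.Prime) (hp11 : 11 ≤ p) (hr : 2 ≤ r) :
    ratCong p r (hsum p 6 (p ^ r))
      (-((Nat.factorial 5 : ℚ) / 18) * (p : ℚ) ^ (r - 1) * bernoulli (p - 3) ^ 2) := by
  have : Fact p.Prime := ⟨hp⟩
  obtain ⟨k, rfl⟩ := Nat.exists_eq_add_of_le' (Nat.one_le_of_lt hr)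
  let b : ℤ_[p] := ⟨bernoulli (p - 3), norm_bernoulli_le_one (by omega)⟩
  refine ratCong_of_pow_dvd_sub (cast_hsum_eq_coeff_recipSeries_pow p 6 _)
    (b := -(20 * Ring.inverse 3 * p ^ k * b ^ 2)) ?_ ?_
  · have h3 : ¬p ∣ 3 := Nat.not_dvd_of_pos_of_lt three_pos (by omega)
    have hv3 : ((Ring.inverse 3 : ℤ_[p]) : ℚ_[p]) = 3⁻¹ :=
      (coe_inverse_natCast 3).trans (if_neg h3)
    have hb : (b : ℚ_[p]) = (bernoulli (p - 3) : ℚ) := rfl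
    have h20 : ((20 : ℤ_[p]) : ℚ_[p]) = 20 := rfl
    push_cast [hv3, hb, h20, Nat.factorial]
    ring
  · rw [sub_neg_eq_add]
    exact pow_dvd_coeff_recipSeries_pow_six_add_bernoulli (by omega) (by omega) rfl
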